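/- Let n ≥ 1 and let f be a symmetric Boolean function on n variables (i.e., f(x) depends only on the number of ones in x) with f⁻¹(1) nonempty. Then there exists a symmetric distribution μ on f⁻¹(1) (i.e., μ(x) depends only on the number of ones in x) such that D(f) = D_μ(f). -/

import Mathlib

/-!
`Dmu f` is the supremum of finitely many functions that are linear in the distribution, so it is
continuous, and it attains its minimum `Dof f` on the compact set of distributions on `f⁻¹(1)`
(`exists_minimizer`). Averaging a distribution over all permutations of the coordinates gives a
symmetric distribution, because two inputs with equally many ones differ by such a permutation
(`exists_perm_of_ones_eq`). Averaging does not increase `Dmu f`: the acceptance probability of `φ`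
under the permuted distribution is that of a permuted formula of the same size under `μ`, and this
permuted formula is again one-sided since `f` is symmetric (`Dmu_symmetrize_le`). Hence the average
of a minimizer is a symmetric minimizer.
-/

/-- A literal over `n` variables: a coordinate `x_i` (if `neg = false`)
or its negation `¬ x_i` (if `neg = true`). -/
structure Lit (n : ℕ) where
  idx : Fin n
  neg : Bool
deriving DecidableEq

/-- Evaluation of a literal at an assignment. -/
def Lit.eval {n : ℕ} (l : Lit n) (x : Fin n → Bool) : Bool :=
  if l.neg then !(x l.idx) else x l.idx

/-- A clause: a finite set of literals, evaluated as their disjunction. -/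
abbrev Clause (n : ℕ) := Finset (Lit n)

/-- A CNF formula: a finite set of clauses, evaluated as their conjunction.
Its size is its number of clauses (`Finset.card`). -/
abbrev CNF (n : ℕ) := Finset (Clause n)

/-- `φ.sat x` means the CNF formula `φ` evaluates to `1` at `x`. -/
def CNF.sat {n : ℕ} (φ : CNF n) (x : Fin n → Bool) : Prop :=
  ∀ c ∈ φ, ∃ l ∈ c, l.eval x = true

instance {n : ℕ} (φ : CNF n) (x : Fin n → Bool) : Decidable (φ.sat x) :=
  inferInstanceAs (Decidable (∀ c ∈ φ, ∃ l ∈ c, Lit.eval l x = true))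

/-- `φ⁻¹(1) ⊆ f⁻¹(1)`: the formula does not err on inputs where `f` is `0`. -/
def CNF.onesided {n : ℕ} (φ : CNF n) (f : (Fin n → Bool) → Bool) : Prop :=
  ∀ x, φ.sat x → f x = true

/-- A CNF formula is monotone if none of its literals is negated. -/
def CNF.mono {n : ℕ} (φ : CNF n) : Prop :=
  ∀ c ∈ φ, ∀ l ∈ c, l.neg = false

/-- A distribution on `f⁻¹(1)`: nonnegative, supported on `f⁻¹(1)`, summing to 1. -/
def IsDistOn {n : ℕ} (μ : (Fin n → Bool) → ℝ) (f : (Fin n → Bool) → Bool) : Prop :=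
  (∀ x, 0 ≤ μ x) ∧ (∀ x, f x = false → μ x = 0) ∧ (∑ x, μ x) = 1

/-- `Pr_{x ∼ μ}[φ(x) = 1]`. -/
noncomputable def CNF.pr {n : ℕ} (φ : CNF n) (μ : (Fin n → Bool) → ℝ) : ℝ :=
  ∑ x, if φ.sat x then μ x else 0

/-- `D_μ(f)`: the maximum, over CNF formulas `φ` with `φ⁻¹(1) ⊆ f⁻¹(1)` and `|φ| ≥ 1`,
of `Pr_{x∼μ}[φ(x)=1] / |φ|` (0 if there is no such formula). -/
noncomputable def Dmu {n : ℕ} (f : (Fin n → Bool) → Bool) (μ : (Fin n → Bool) → ℝ) : ℝ :=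
  sSup {r : ℝ | ∃ φ : CNF n, φ.onesided f ∧ 1 ≤ φ.card ∧ r = φ.pr μ / φ.card}

/-- `D(f)`: the minimum of `D_μ(f)` over distributions `μ` on `f⁻¹(1)`. -/
noncomputable def Dof {n : ℕ} (f : (Fin n → Bool) → Bool) : ℝ :=
  sInf {r : ℝ | ∃ μ, IsDistOn μ f ∧ r = Dmu f μ}

/-- The monotone variant `D⁺_μ(f)`, restricted to monotone CNF formulas. -/
noncomputable def DmuPlus {n : ℕ} (f : (Fin n → Bool) → Bool) (μ : (Fin n → Bool) → ℝ) : ℝ :=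
  sSup {r : ℝ | ∃ φ : CNF n, φ.mono ∧ φ.onesided f ∧ 1 ≤ φ.card ∧ r = φ.pr μ / φ.card}

/-- `D⁺(f)`: the minimum of `D⁺_μ(f)` over distributions `μ` on `f⁻¹(1)`. -/
noncomputable def DPlus {n : ℕ} (f : (Fin n → Bool) → Bool) : ℝ :=
  sInf {r : ℝ | ∃ μ, IsDistOn μ f ∧ r = DmuPlus f μ}

/-- A list of CNF formulas computes `f` as their pointwise disjunction. -/
def ComputedByOr {n : ℕ} (L : List (CNF n)) (f : (Fin n → Bool) → Bool) : Prop :=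
  ∀ x, f x = true ↔ ∃ φ ∈ L, φ.sat x

/-- `L₃(f)`: the minimum size (total number of clauses) of a depth-3 formula computing `f`. -/
noncomputable def L3 {n : ℕ} (f : (Fin n → Bool) → Bool) : ℕ :=
  sInf {s : ℕ | ∃ L : List (CNF n), ComputedByOr L f ∧ s = (L.map Finset.card).sum}

/-- `L₃⁺(f)`: the minimum size of a depth-3 monotone formula computing `f`. -/
noncomputable def L3Plus {n : ℕ} (f : (Fin n → Bool) → Bool) : ℕ :=
  sInf {s : ℕ | ∃ L : List (CNF n), (∀ φ ∈ L, φ.mono) ∧ ComputedByOr L f ∧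
    s = (L.map Finset.card).sum}

/-- The number of ones in a Boolean input. -/
def ones {n : ℕ} (x : Fin n → Bool) : ℕ := (Finset.univ.filter fun i => x i = true).card

/-- The parity function: `1` iff the number of ones is odd. -/
def parityF (n : ℕ) : (Fin n → Bool) → Bool := fun x => decide (ones x % 2 = 1)

/-- The majority function: `1` iff the number of ones is at least `n/2`. -/
def majF (n : ℕ) : (Fin n → Bool) → Bool := fun x => decide (n ≤ 2 * ones x)

/-- `Pr_{x uniform in f⁻¹(1)}[φ(x) = 1]`. -/
noncomputable def prUnif {n : ℕ} (f : (Fin n → Bool) → Bool) (φ : CNF n) : ℝ :=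
  ((Finset.univ.filter fun x => f x = true ∧ φ.sat x).card : ℝ) /
    ((Finset.univ.filter fun x => f x = true).card : ℝ)

/-- `x` is an isolated solution of `φ`: `φ(x)=1` and `φ(y)=0` for every `y`
differing from `x` in exactly one coordinate. -/
def IsIsolated {n : ℕ} (φ : CNF n) (x : Fin n → Bool) : Prop :=
  φ.sat x ∧ ∀ y : Fin n → Bool, hammingDist x y = 1 → ¬ φ.sat y

instance (n : ℕ) : Finite (Lit n) :=
  Finite.of_injective (fun l : Lit n => (l.idx, l.neg)) (by
    rintro ⟨i, a⟩ ⟨j, b⟩ h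
    simpa using h)

/-! ### Permuting coordinates -/

lemma ones_comp {n : ℕ} (σ : Equiv.Perm (Fin n)) (x : Fin n → Bool) :
    ones (x ∘ σ) = ones x := by
  unfold ones
  exact Finset.card_equiv σ (by simp)

lemma exists_perm_of_ones_eq {n : ℕ} {x y : Fin n → Bool} (h : ones x = ones y) :
    ∃ σ : Equiv.Perm (Fin n), x = y ∘ σ := by
  have hc : Fintype.card {i // x i = true} = Fintype.card {i // y i = true} := by
    rw [Fintype.card_subtype, Fintype.card_subtype]
    exact h
  let e := Fintype.equivOfCardEq hc
  refine ⟨e.extendSubtype, funext fun i => ?_⟩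
  by_cases hi : x i = true
  · simpa [hi] using (e.extendSubtype_mem i hi).symm
  · have := e.extendSubtype_not_mem i hi
    simp only [Bool.not_eq_true] at hi this
    simp [hi, this]

/-- The literal obtained by renaming the variable of `l` by `σ`. -/
def Lit.permute {n : ℕ} (σ : Equiv.Perm (Fin n)) (l : Lit n) : Lit n := ⟨σ l.idx, l.neg⟩

lemma Lit.permute_injective {n : ℕ} (σ : Equiv.Perm (Fin n)) :
    Function.Injective (Lit.permute σ) := by
  rintro ⟨i, a⟩ ⟨j, b⟩ h
  simpa [Lit.permute] using h

lemma Lit.eval_permute {n : ℕ} (σ : Equiv.Perm (Fin n)) (l : Lit n) (x : Fin n → Bool) :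
    (l.permute σ).eval x = l.eval (x ∘ σ) := rfl

/-- The formula obtained by renaming the variables of `φ` by `σ`. -/
def CNF.permute {n : ℕ} (σ : Equiv.Perm (Fin n)) (φ : CNF n) : CNF n :=
  φ.image (Finset.image (Lit.permute σ))

lemma CNF.card_permute {n : ℕ} (σ : Equiv.Perm (Fin n)) (φ : CNF n) :
    (CNF.permute σ φ).card = φ.card :=
  Finset.card_image_of_injective _ (Finset.image_injective (Lit.permute_injective σ))

lemma CNF.sat_permute {n : ℕ} (σ : Equiv.Perm (Fin n)) (φ : CNF n) (x : Fin n → Bool) :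
    (CNF.permute σ φ).sat x ↔ φ.sat (x ∘ σ) := by
  simp [CNF.sat, CNF.permute, Lit.eval_permute]

lemma sum_comp_perm {n : ℕ} (σ : Equiv.Perm (Fin n)) (g : (Fin n → Bool) → ℝ) :
    ∑ x : Fin n → Bool, g (x ∘ σ) = ∑ x, g x :=
  Equiv.sum_comp (σ.symm.arrowCongr (Equiv.refl Bool)) g

lemma CNF.pr_comp {n : ℕ} (σ : Equiv.Perm (Fin n)) (φ : CNF n) (μ : (Fin n → Bool) → ℝ) :
    φ.pr (fun x => μ (x ∘ σ)) = (CNF.permute σ⁻¹ φ).pr μ := by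
  unfold CNF.pr
  rw [← sum_comp_perm σ fun x => if (CNF.permute σ⁻¹ φ).sat x then μ x else 0]
  refine Finset.sum_congr rfl fun x _ => ?_
  have hx : (x ∘ σ) ∘ (σ⁻¹ : Equiv.Perm (Fin n)) = x := by
    funext i
    simp
  simp only [CNF.sat_permute, hx]

/-! ### The quantity `Dmu` -/

/-- The value set defining `Dmu f μ` is the image of this finite set of formulas. -/
noncomputable def goodFormulas {n : ℕ} (f : (Fin n → Bool) → Bool) : Finset (CNF n) :=
  (Set.toFinite {φ : CNF n | φ.onesided f ∧ 1 ≤ φ.card}).toFinset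

lemma mem_goodFormulas {n : ℕ} {f : (Fin n → Bool) → Bool} {φ : CNF n} :
    φ ∈ goodFormulas f ↔ φ.onesided f ∧ 1 ≤ φ.card := by
  simp [goodFormulas]

/-- The formula whose only clause is empty is unsatisfiable, hence one-sided. -/
lemma goodFormulas_nonempty {n : ℕ} (f : (Fin n → Bool) → Bool) : (goodFormulas f).Nonempty :=
  ⟨{∅}, mem_goodFormulas.2 ⟨fun x h => by simp [CNF.sat] at h, by simp⟩⟩

lemma Dmu_eq_sup' {n : ℕ} (f : (Fin n → Bool) → Bool) (μ : (Fin n → Bool) → ℝ) :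
    Dmu f μ = (goodFormulas f).sup' (goodFormulas_nonempty f) fun φ => φ.pr μ / φ.card := by
  rw [Finset.sup'_eq_csSup_image, Dmu]
  congr 1
  ext r
  simp only [Set.mem_ofPred_eq, Set.mem_image, Finset.mem_coe, mem_goodFormulas, and_assoc,
    eq_comm (a := r)]

lemma continuous_Dmu {n : ℕ} (f : (Fin n → Bool) → Bool) : Continuous (Dmu f) := by
  rw [funext (Dmu_eq_sup' f)]
  refine Continuous.finset_sup'_apply _ fun φ _ => Continuous.div_const ?_ _
  refine continuous_finsetSum _ fun x _ => ?_
  split_ifs <;> fun_prop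

lemma pr_le {n : ℕ} {f : (Fin n → Bool) → Bool} (μ : (Fin n → Bool) → ℝ) {φ : CNF n}
    (hφ : φ ∈ goodFormulas f) : φ.pr μ / φ.card ≤ Dmu f μ := by
  rw [Dmu_eq_sup']
  exact Finset.le_sup' (fun φ : CNF n => φ.pr μ / φ.card) hφ

lemma isCompact_dist {n : ℕ} (f : (Fin n → Bool) → Bool) :
    IsCompact {μ : (Fin n → Bool) → ℝ | IsDistOn μ f} := by
  have : {μ : (Fin n → Bool) → ℝ | IsDistOn μ f} =
      stdSimplex ℝ (Fin n → Bool) ∩ ⋂ x, {μ | f x = false → μ x = 0} := by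
    ext μ
    simp only [IsDistOn, stdSimplex, Set.mem_ofPred_eq, Set.mem_inter_iff, Set.mem_iInter]
    tauto
  rw [this]
  refine (isCompact_stdSimplex ℝ _).inter_right (isClosed_iInter fun x => ?_)
  by_cases hx : f x = false
  · simpa [hx] using isClosed_eq (continuous_apply x) continuous_const
  · simp [hx]

lemma exists_minimizer {n : ℕ} {f : (Fin n → Bool) → Bool} (hf : ∃ x, f x = true) :
    ∃ μ, IsDistOn μ f ∧ ∀ ν, IsDistOn ν f → Dmu f μ ≤ Dmu f ν := by
  obtain ⟨a, ha⟩ := hf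
  have hne : {μ : (Fin n → Bool) → ℝ | IsDistOn μ f}.Nonempty := by
    refine ⟨Pi.single a 1, fun x => ?_, fun x hx => ?_, by simp⟩
    · by_cases h : x = a
      · subst h; simp
      · simp [h]
    · have h : x ≠ a := by rintro rfl; simp [ha] at hx
      simp [h]
  obtain ⟨μ, hμ, hmin⟩ :=
    (isCompact_dist f).exists_isMinOn hne (continuous_Dmu f).continuousOn
  exact ⟨μ, hμ, fun ν hν => hmin hν⟩

/-! ### Symmetrization -/

/-- The average of `μ` over all permutations of the coordinates. -/
noncomputable def symmetrize {n : ℕ} (μ : (Fin n → Bool) → ℝ) (x : Fin n → Bool) : ℝ :=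
  (∑ σ : Equiv.Perm (Fin n), μ (x ∘ σ)) / Fintype.card (Equiv.Perm (Fin n))

lemma symmetrize_eq {n : ℕ} (μ : (Fin n → Bool) → ℝ) {x y : Fin n → Bool}
    (h : ones x = ones y) : symmetrize μ x = symmetrize μ y := by
  obtain ⟨τ, rfl⟩ := exists_perm_of_ones_eq h
  unfold symmetrize
  congr 1
  exact Equiv.sum_comp (Equiv.mulLeft τ) fun σ => μ (y ∘ σ)

lemma card_perm_pos (n : ℕ) : (0 : ℝ) < Fintype.card (Equiv.Perm (Fin n)) :=
  Nat.cast_pos.2 Fintype.card_pos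

lemma isDistOn_symmetrize {n : ℕ} {f : (Fin n → Bool) → Bool}
    (hsym : ∀ x y : Fin n → Bool, ones x = ones y → f x = f y)
    {μ : (Fin n → Bool) → ℝ} (hμ : IsDistOn μ f) : IsDistOn (symmetrize μ) f := by
  obtain ⟨h0, hs, h1⟩ := hμ
  refine ⟨fun x => ?_, fun x hx => ?_, ?_⟩
  · exact div_nonneg (Finset.sum_nonneg fun σ _ => h0 _) (card_perm_pos n).le
  · rw [symmetrize, Finset.sum_eq_zero, zero_div]
    exact fun σ _ => hs _ ((hsym _ _ (ones_comp σ x)).trans hx)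
  · simp only [symmetrize]
    rw [← Finset.sum_div, Finset.sum_comm]
    simp only [sum_comp_perm, h1]
    simp

lemma pr_symmetrize {n : ℕ} (φ : CNF n) (μ : (Fin n → Bool) → ℝ) :
    φ.pr (symmetrize μ) =
      (∑ σ : Equiv.Perm (Fin n), (CNF.permute σ⁻¹ φ).pr μ) /
        Fintype.card (Equiv.Perm (Fin n)) := by
  simp only [← CNF.pr_comp]
  unfold CNF.pr
  rw [Finset.sum_comm, Finset.sum_div]
  refine Finset.sum_congr rfl fun x _ => ?_
  split_ifs <;> simp [symmetrize]

lemma Dmu_symmetrize_le {n : ℕ} {f : (Fin n → Bool) → Bool}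
    (hsym : ∀ x y : Fin n → Bool, ones x = ones y → f x = f y)
    (μ : (Fin n → Bool) → ℝ) : Dmu f (symmetrize μ) ≤ Dmu f μ := by
  rw [Dmu_eq_sup' f (symmetrize μ)]
  refine Finset.sup'_le _ _ fun φ hφ => ?_
  have key : ∀ σ : Equiv.Perm (Fin n),
      (CNF.permute σ⁻¹ φ).pr μ / φ.card ≤ Dmu f μ := by
    intro σ
    obtain ⟨hone, hcard⟩ := mem_goodFormulas.1 hφ
    rw [← CNF.card_permute σ⁻¹ φ]
    refine pr_le μ (mem_goodFormulas.2 ⟨fun x hx => ?_, by rwa [CNF.card_permute]⟩)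
    rw [← hsym _ _ (ones_comp σ⁻¹ x)]
    exact hone _ ((CNF.sat_permute _ _ _).1 hx)
  rw [pr_symmetrize, div_right_comm, div_le_iff₀ (card_perm_pos n), Finset.sum_div]
  refine (Finset.sum_le_sum fun σ _ => key σ).trans_eq ?_
  simp [mul_comm]

/-- a symmetric function has a symmetric hardest distribution. -/
theorem stmt2 (n : ℕ) (hn : 1 ≤ n) (f : (Fin n → Bool) → Bool) (hf : ∃ x, f x = true)
    (hsym : ∀ x y : Fin n → Bool, ones x = ones y → f x = f y) :
    ∃ μ : (Fin n → Bool) → ℝ, IsDistOn μ f ∧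
      (∀ x y : Fin n → Bool, ones x = ones y → μ x = μ y) ∧
      Dof f = Dmu f μ := by
  obtain ⟨μ, hμ, hmin⟩ := exists_minimizer hf
  have hs := isDistOn_symmetrize hsym hμ
  refine ⟨symmetrize μ, hs, fun x y h => symmetrize_eq μ h, ?_⟩
  have hleast : IsLeast {r : ℝ | ∃ μ, IsDistOn μ f ∧ r = Dmu f μ} (Dmu f (symmetrize μ)) := by
    refine ⟨⟨_, hs, rfl⟩, ?_⟩
    rintro r ⟨ν, hν, rfl⟩
    exact (Dmu_symmetrize_le hsym μ).trans (hmin ν hν)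
  exact hleast.csInf_eq
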